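/- Let G be a finite simple graph and let H be a path-intersecting subgraph of G. Then the chromatic polynomial χ(H,t) divides the chromatic polynomial χ(G,t) in the polynomial ring ℚ[t]. -/

import Mathlib

/-- A subgraph `H` of a simple graph `G` is *path-intersecting* if for every pair of
vertices `u v ∈ V_H` that are distinct and non-adjacent in `H`, there is no path `P`
in `G` from `u` to `v` whose edge set is disjoint from the edge set of `H` and whose
vertex set meets the vertex set of `H` exactly in `{u, v}`. -/
def SimpleGraph.Subgraph.PathIntersecting {V : Type*} {G : SimpleGraph V}
    (H : G.Subgraph) : Prop :=
  ∀ ⦃u v : V⦄, u ∈ H.verts → v ∈ H.verts → u ≠ v → ¬ H.Adj u v →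
    ∀ p : G.Walk u v, p.IsPath → (∀ e ∈ p.edges, e ∉ H.edgeSet) →
      ¬ (∀ w ∈ p.support, w ∈ H.verts → w = u ∨ w = v)

/-!
A colouring of `H` extends to `G` independently over the connected components of `G - V(H)`. By
path-intersection the vertices of `H` attached to one such component are pairwise adjacent in `H`,
so any two colourings `c`, `c'` of `H` are injective on them and a permutation of the colours takes
`c` to `c'` there. Recolouring each component by its permutation turns the extensions of `c` into
the extensions of `c'`. Hence all colourings of `H` have equally many extensions, and `χ(H, k)`
divides `χ(G, k)` for every `k`.

To pass to polynomials, let `R` be the remainder of `P` modulo `Q`, where `Q(k) ∣ P(k)` for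
infinitely many `k`. Clearing the denominators of the quotient by an integer `d ≠ 0`, we get
`Q(k) ∣ d R(k)` for infinitely many `k`, while `d R(k) / Q(k) → 0`; hence `R = 0`.
-/

open Polynomial Filter Topology

section PolynomialDivisibility

theorem eq_zero_of_degree_lt_of_frequently_eval_eq_mul_intCast {𝕜 : Type*} [NormedField 𝕜]
    [LinearOrder 𝕜] [IsStrictOrderedRing 𝕜] [OrderTopology 𝕜] {P Q : 𝕜[X]}
    (hdeg : P.degree < Q.degree)
    (h : ∃ᶠ x in atTop, ∃ n : ℤ, P.eval x = Q.eval x * n) : P = 0 := by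
  by_contra hP
  have hlim : Tendsto (fun x => |P.eval x / Q.eval x|) atTop (𝓝 0) := by
    simpa only [abs_zero] using (div_tendsto_atTop_zero_of_degree_lt P Q hdeg).abs
  obtain ⟨x, ⟨n, hn⟩, hlt, hroot⟩ :=
    (h.and_eventually
      ((hlim.eventually_lt_const one_pos).and (eventually_atTop_not_isRoot P hP))).exists
  have hQx : Q.eval x ≠ 0 := fun hQx => hroot (by rw [IsRoot, hn, hQx, zero_mul])
  rw [hn, mul_div_cancel_left₀ _ hQx] at hlt
  have hn0 : n = 0 := Int.abs_lt_one_iff.mp (by exact_mod_cast hlt)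
  exact hroot (by rw [IsRoot, hn, hn0, Int.cast_zero, mul_zero])

theorem exists_mem_forall_exists_algebraMap_mul_eval_eq {R S : Type*} [CommRing R] [CommRing S]
    [Algebra R S] (M : Submonoid R) [IsLocalization M S] (p : S[X]) :
    ∃ d ∈ M, ∀ r : R, ∃ m : R, algebraMap R S d * p.eval (algebraMap R S r) = algebraMap R S m := by
  obtain ⟨d, hdM, hd⟩ := IsLocalization.integerNormalization_spec M p
  refine ⟨d, hdM, fun r => ⟨(IsLocalization.integerNormalization M p).eval r, ?_⟩⟩
  rw [← eval₂_at_apply, ← eval_map, hd, eval_smul, Algebra.smul_def]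

theorem dvd_of_frequently_eval_eq_mul_intCast {P Q : ℚ[X]}
    (h : ∃ᶠ k : ℕ in atTop, ∃ n : ℤ, P.eval (k : ℚ) = Q.eval (k : ℚ) * n) : Q ∣ P := by
  have hcast : Tendsto ((↑) : ℕ → ℚ) atTop atTop := tendsto_natCast_atTop_atTop
  obtain rfl | hQ := eq_or_ne Q 0
  · by_contra hP
    rw [zero_dvd_iff] at hP
    obtain ⟨k, ⟨n, hn⟩, hroot⟩ :=
      (h.and_eventually (hcast.eventually (eventually_atTop_not_isRoot P hP))).exists
    exact hroot (by rw [IsRoot, hn, eval_zero, zero_mul])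
  obtain ⟨d, hd, hquot⟩ :=
    exists_mem_forall_exists_algebraMap_mul_eval_eq (nonZeroDivisors ℤ) (P / Q)
  have hd0 : (d : ℚ) ≠ 0 := Int.cast_ne_zero.mpr (nonZeroDivisors.ne_zero hd)
  have hdeg : (C (d : ℚ) * (P % Q)).degree < Q.degree := by
    rw [degree_C_mul hd0]
    exact EuclideanDomain.mod_lt P hQ
  have hrem : C (d : ℚ) * (P % Q) = 0 := by
    refine eq_zero_of_degree_lt_of_frequently_eval_eq_mul_intCast hdeg
      (hcast.frequently (h.mono ?_))
    rintro k ⟨n, hn⟩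
    obtain ⟨m, hm⟩ := hquot k
    simp only [algebraMap_int_eq, eq_intCast, Int.cast_natCast] at hm
    have hmod := congrArg (eval (k : ℚ)) (EuclideanDomain.div_add_mod P Q)
    rw [eval_add, eval_mul] at hmod
    refine ⟨d * n - m, ?_⟩
    rw [eval_mul, eval_C]
    push_cast
    linear_combination d * hmod + d * hn - eval (k : ℚ) Q * hm
  rw [← EuclideanDomain.mod_eq_zero]
  exact (mul_eq_zero.mp hrem).resolve_left (C_ne_zero.mpr hd0)

end PolynomialDivisibility

section PathIntersecting

variable {V : Type*} {G : SimpleGraph V} {H : G.Subgraph}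

theorem adj_of_walk_of_pathIntersecting (hH : H.PathIntersecting) {u v : V} (hu : u ∈ H.verts)
    (hv : v ∈ H.verts) (huv : u ≠ v) (p : G.Walk u v)
    (hp : ∀ w ∈ p.support, w ∈ H.verts → w = u ∨ w = v) : H.Adj u v := by
  classical
  by_contra hadj
  have hends : ∀ w ∈ p.bypass.support, w ∈ H.verts → w = u ∨ w = v :=
    fun w hw => hp w (p.support_bypass_subset_support hw)
  refine hH hu hv huv hadj p.bypass p.bypass_isPath ?_ hends
  rintro ⟨x, y⟩ he (hxy : H.Adj x y)
  obtain rfl | rfl := hends x (p.bypass.fst_mem_support_of_mem_edges he) hxy.fst_mem <;>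
  obtain rfl | rfl := hends y (p.bypass.snd_mem_support_of_mem_edges he) hxy.snd_mem
  · exact hxy.ne rfl
  · exact hadj hxy
  · exact hadj hxy.symm
  · exact hxy.ne rfl

theorem isInduced_of_pathIntersecting (hH : H.PathIntersecting) : H.IsInduced := by
  intro u hu v hv huv
  refine adj_of_walk_of_pathIntersecting hH hu hv huv.ne huv.toWalk fun w hw _ => ?_
  simpa using hw

variable (H) in
/-- The graph `G - V(H)` obtained from `G` by deleting the vertices of `H`. -/
abbrev outerGraph : SimpleGraph (H.vertsᶜ : Set V) :=
  G.induce H.vertsᶜ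

/-- The vertices of `H` that have a neighbour in the component `C` of `G - V(H)`. -/
def attachmentSet (C : (outerGraph H).ConnectedComponent) : Set H.verts :=
  {u | ∃ x ∈ C.supp, G.Adj u x}

theorem isClique_attachmentSet_of_pathIntersecting (hH : H.PathIntersecting)
    (C : (outerGraph H).ConnectedComponent) : H.coe.IsClique (attachmentSet C) := by
  rintro u ⟨x, hxC, hux⟩ v ⟨y, hyC, hvy⟩ huv
  obtain ⟨q⟩ := C.reachable_of_mem_supp hxC hyC
  let outerWalk : G.Walk x y := q.map (SimpleGraph.Embedding.induce H.vertsᶜ).toHom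
  have houter : ∀ w ∈ outerWalk.support, w ∉ H.verts := by
    intro w hw
    obtain ⟨z, -, rfl⟩ := List.mem_map.mp (SimpleGraph.Walk.support_map _ q ▸ hw)
    exact z.2
  refine adj_of_walk_of_pathIntersecting hH u.2 v.2 (Subtype.coe_ne_coe.mpr huv)
    (.cons hux (outerWalk.concat hvy.symm)) fun w hw hwH => ?_
  simp only [SimpleGraph.Walk.support_cons, SimpleGraph.Walk.support_concat, List.mem_cons,
    List.mem_append, List.not_mem_nil, or_false] at hw
  obtain hwu | hw | hwv := hw
  · exact .inl hwu
  · exact absurd hwH (houter w hw)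
  · exact .inr hwv

end PathIntersecting

section Recoloring

variable {V α : Type*} {G : SimpleGraph V} {H : G.Subgraph} {c c' : H.coe.Coloring α}
  {σ : (outerGraph H).ConnectedComponent → Equiv.Perm α}

/-- The proper colourings of `G` that restrict to the colouring `c` of `H`. -/
abbrev ColoringExtension (c : H.coe.Coloring α) : Type _ :=
  {f : G.Coloring α // f.comp H.hom = c}

theorem coloringExtension_apply (f : ColoringExtension c) (u : H.verts) : f.1 u = c u :=
  DFunLike.congr_fun f.2 u

/-- The permutations `σ C`, one for each component `C` of `G - V(H)`, match the colours of `c` with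
those of `c'` on the attachment sets. This is what is needed to recolour the components by `σ` when
the colouring of `H` changes from `c` to `c'`. -/
def MatchesOnAttachments (c c' : H.coe.Coloring α)
    (σ : (outerGraph H).ConnectedComponent → Equiv.Perm α) : Prop :=
  ∀ C, ∀ u ∈ attachmentSet C, σ C (c u) = c' u

theorem MatchesOnAttachments.symm (hσ : MatchesOnAttachments c c' σ) :
    MatchesOnAttachments c' c fun C => (σ C).symm :=
  fun C u hu => (Equiv.symm_apply_eq _).mpr (hσ C u hu).symm

theorem exists_matchesOnAttachments [Finite α] (hH : H.PathIntersecting)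
    (c c' : H.coe.Coloring α) : ∃ σ, MatchesOnAttachments c c' σ := by
  have hinj (C : (outerGraph H).ConnectedComponent) (b : H.coe.Coloring α) :
      Function.Injective fun u : attachmentSet C => b u :=
    b.injective_comp_of_pairwise_adj _ fun u v huv =>
      isClique_attachmentSet_of_pathIntersecting hH C u.2 v.2 (Subtype.coe_ne_coe.mpr huv)
  have hperm (C : (outerGraph H).ConnectedComponent) :
      ∃ τ : Equiv.Perm α, ∀ u : attachmentSet C, τ (c u) = c' u := by
    have : Finite (attachmentSet C) := .of_injective _ (hinj C c)
    exact Equiv.Perm.exists_extending_pair _ _ (hinj C c) (hinj C c')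
  choose σ hσ using hperm
  exact ⟨σ, fun C u hu => hσ C ⟨u, hu⟩⟩

open Classical in
/-- The vertex colouring that is `c'` on `H` and `σ C ∘ f` on each component `C` of `G - V(H)`. It
is defined for all functions, so that properness can be proved separately. -/
noncomputable def recolorFun (c' : H.verts → α)
    (σ : (outerGraph H).ConnectedComponent → Equiv.Perm α) (f : V → α) (v : V) : α :=
  if hv : v ∈ H.verts then c' ⟨v, hv⟩
  else σ ((outerGraph H).connectedComponentMk ⟨v, hv⟩) (f v)

theorem recolorFun_of_mem (b : H.verts → α) (f : V → α) {v : V} (hv : v ∈ H.verts) :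
    recolorFun b σ f v = b ⟨v, hv⟩ :=
  dif_pos hv

theorem recolorFun_of_notMem (b : H.verts → α) (f : V → α) {v : V} (hv : v ∉ H.verts) :
    recolorFun b σ f v = σ ((outerGraph H).connectedComponentMk ⟨v, hv⟩) (f v) :=
  dif_neg hv

theorem recolorFun_ne_of_adj_of_mem_of_notMem (hσ : MatchesOnAttachments c c' σ)
    (f : ColoringExtension c) {u v : V} (hu : u ∈ H.verts) (hv : v ∉ H.verts) (huv : G.Adj u v) :
    recolorFun c' σ f.1 u ≠ recolorFun c' σ f.1 v := by
  have hattach : (⟨u, hu⟩ : H.verts) ∈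
      attachmentSet ((outerGraph H).connectedComponentMk ⟨v, hv⟩) := ⟨⟨v, hv⟩, rfl, huv⟩
  rw [recolorFun_of_mem _ _ hu, recolorFun_of_notMem _ _ hv, ← hσ _ _ hattach,
    ← coloringExtension_apply f]
  exact (σ _).injective.ne (f.1.valid huv)

theorem recolorFun_ne_of_adj (hind : H.IsInduced) (hσ : MatchesOnAttachments c c' σ)
    (f : ColoringExtension c) {u v : V} (huv : G.Adj u v) :
    recolorFun c' σ f.1 u ≠ recolorFun c' σ f.1 v := by
  by_cases hu : u ∈ H.verts <;> by_cases hv : v ∈ H.verts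
  · rw [recolorFun_of_mem _ _ hu, recolorFun_of_mem _ _ hv]
    exact c'.valid (hind hu hv huv)
  · exact recolorFun_ne_of_adj_of_mem_of_notMem hσ f hu hv huv
  · exact (recolorFun_ne_of_adj_of_mem_of_notMem hσ f hv hu huv.symm).symm
  · have hadj : (outerGraph H).Adj ⟨u, hu⟩ ⟨v, hv⟩ := huv
    rw [recolorFun_of_notMem _ _ hu, recolorFun_of_notMem _ _ hv,
      SimpleGraph.ConnectedComponent.sound hadj.reachable]
    exact (σ _).injective.ne (f.1.valid huv)

/-- Recolouring by `σ`, as a map from the extensions of `c` to those of `c'`. -/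
noncomputable def recolor (hind : H.IsInduced) (hσ : MatchesOnAttachments c c' σ)
    (f : ColoringExtension c) : ColoringExtension c' :=
  ⟨.mk (recolorFun c' σ f.1) fun huv => recolorFun_ne_of_adj hind hσ f huv,
    DFunLike.ext _ _ fun u => recolorFun_of_mem _ _ u.2⟩

theorem recolor_symm_recolor (hind : H.IsInduced) (hσ : MatchesOnAttachments c c' σ)
    (f : ColoringExtension c) : recolor hind hσ.symm (recolor hind hσ f) = f := by
  refine Subtype.ext (DFunLike.ext _ _ fun v => ?_)
  change recolorFun c (fun C => (σ C).symm) (recolorFun c' σ f.1) v = f.1 v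
  by_cases hv : v ∈ H.verts
  · rw [recolorFun_of_mem _ _ hv, ← coloringExtension_apply f]
  · rw [recolorFun_of_notMem _ _ hv, recolorFun_of_notMem _ _ hv, Equiv.symm_apply_apply]

/-- Recolouring by `σ` is a bijection, with inverse recolouring by the inverse permutations. -/
noncomputable def recolorEquiv (hind : H.IsInduced) (hσ : MatchesOnAttachments c c' σ) :
    ColoringExtension c ≃ ColoringExtension c' where
  toFun := recolor hind hσ
  invFun := recolor hind hσ.symm
  left_inv := recolor_symm_recolor hind hσ
  right_inv := recolor_symm_recolor hind hσ.symm

theorem card_coloring_dvd_of_pathIntersecting [Finite α] (hH : H.PathIntersecting) :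
    Nat.card (H.coe.Coloring α) ∣ Nat.card (G.Coloring α) := by
  let restrict (f : G.Coloring α) : H.coe.Coloring α := f.comp H.hom
  obtain hempty | ⟨⟨c₀⟩⟩ := isEmpty_or_nonempty (H.coe.Coloring α)
  · have : IsEmpty (G.Coloring α) := Function.isEmpty restrict
    simp
  have extensionEquiv (c : H.coe.Coloring α) : ColoringExtension c ≃ ColoringExtension c₀ :=
    recolorEquiv (isInduced_of_pathIntersecting hH)
      (exists_matchesOnAttachments hH c c₀).choose_spec
  have coloringEquiv : G.Coloring α ≃ H.coe.Coloring α × ColoringExtension c₀ :=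
    (Equiv.sigmaFiberEquiv restrict).symm.trans (Equiv.sigmaEquivProdOfEquiv extensionEquiv)
  exact ⟨Nat.card (ColoringExtension c₀), by rw [Nat.card_congr coloringEquiv, Nat.card_prod]⟩

end Recoloring

/-- **Divisibility of chromatic polynomials.**
Let `G` be a finite simple graph and `H` a path-intersecting subgraph of `G`.
Then the chromatic polynomial `χ(H,t)` divides the chromatic polynomial `χ(G,t)`
in `ℚ[t]`. -/
theorem chromatic_polynomial_dvd_of_pathIntersecting {V : Type*} [Fintype V]
    (G : SimpleGraph V) (H : G.Subgraph) (hH : H.PathIntersecting)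
    (PG PH : Polynomial ℚ)
    (hPG : ∀ k : ℕ, PG.eval (k : ℚ) = Nat.card (G.Coloring (Fin k)))
    (hPH : ∀ k : ℕ, PH.eval (k : ℚ) = Nat.card (H.coe.Coloring (Fin k))) :
    PH ∣ PG := by
  refine dvd_of_frequently_eval_eq_mul_intCast (Eventually.of_forall fun k => ?_).frequently
  obtain ⟨n, hn⟩ := card_coloring_dvd_of_pathIntersecting (α := Fin k) hH
  exact ⟨n, by rw [hPG, hPH, hn, Nat.cast_mul, Int.cast_natCast]⟩
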